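/- arXiv:2310.04537 — 8 statements merged into one kernel-verified Lean document; each statement's English description precedes it below -/
import Mathlib

section
/- Let λ₁, λ₂, λ₃, λ₄, z₁₂, z₁₃ be nonzero complex numbers. Define 𝔪ₚ = λₚ + λₚ⁻¹ for p = 1,2,3,4, and define 𝔱₁ = λ₁λ₂/z₁₂ + (−z₁₂z₁₃ + z₁₂ + λ₂²z₁₃)/(λ₁λ₂) + λ₄z₁₂(z₁₃−1)z₁₃/(λ₁²λ₃) + λ₄z₁₃/λ₃, 𝔱₂ = λ₁(z₁₂−1)/(λ₄z₁₂z₁₃) + λ₃(z₁₂(z₁₃−1)+1)/(λ₂z₁₃) − λ₄z₁₂(z₁₃−1)/λ₁, and 𝔱₃ = −λ₂λ₁²(z₁₂−1)/(λ₄z₁₂²z₁₃) + λ₂/(λ₄z₁₂) + λ₁(λ₃²(z₁₂−1)+z₁₃)/(λ₃z₁₂z₁₃) + z₁₃/(λ₁λ₃). Then 𝔱₁𝔱₂𝔱₃ + 𝔱₁² + 𝔱₂² + 𝔱₃² + 𝔪₁𝔪₂𝔪₃𝔪₄ + 𝔪₁² + 𝔪₂² + 𝔪₃² + 𝔪₄²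 − (𝔪₁𝔪₂ + 𝔪₃𝔪₄)·𝔱₁ − (𝔪₂𝔪₃ + 𝔪₁𝔪₄)·𝔱₂ − (𝔪₁𝔪₃ + 𝔪₂𝔪₄)·𝔱₃ − 4 = 0. -/
/-- The trace coordinates `𝔱₁ = tr(h₁₂)`, `𝔱₂ = tr(h₂₃)`, `𝔱₃ = tr(h₁₃)` of a flat `SL(2,ℂ)`
connection on the 4-holed sphere, expressed through the Fock–Goncharov coordinates
`z₁₂, z₁₃` and the hole eigenvalues `λ₁,…,λ₄`, together with `𝔪ₚ = λₚ + λₚ⁻¹`, satisfy the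
defining polynomial relation `P = 0` of the trace-coordinate ring. -/
theorem trace_coordinates_satisfy_polynomial (l1 l2 l3 l4 z12 z13 : ℂ)
    (hl1 : l1 ≠ 0) (hl2 : l2 ≠ 0) (hl3 : l3 ≠ 0) (hl4 : l4 ≠ 0)
    (hz12 : z12 ≠ 0) (hz13 : z13 ≠ 0)
    (m1 m2 m3 m4 t1 t2 t3 : ℂ)
    (hm1 : m1 = l1 + l1⁻¹) (hm2 : m2 = l2 + l2⁻¹)
    (hm3 : m3 = l3 + l3⁻¹) (hm4 : m4 = l4 + l4⁻¹)
    (ht1 : t1 = l1 * l2 / z12 + (-(z12 * z13) + z12 + l2 ^ 2 * z13) / (l1 * l2)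
      + l4 * z12 * (z13 - 1) * z13 / (l1 ^ 2 * l3) + l4 * z13 / l3)
    (ht2 : t2 = l1 * (z12 - 1) / (l4 * z12 * z13) + l3 * (z12 * (z13 - 1) + 1) / (l2 * z13)
      - l4 * z12 * (z13 - 1) / l1)
    (ht3 : t3 = -(l2 * l1 ^ 2 * (z12 - 1)) / (l4 * z12 ^ 2 * z13) + l2 / (l4 * z12)
      + l1 * (l3 ^ 2 * (z12 - 1) + z13) / (l3 * z12 * z13) + z13 / (l1 * l3)) :
    t1 * t2 * t3 + t1 ^ 2 + t2 ^ 2 + t3 ^ 2 + m1 * m2 * m3 * m4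
      + m1 ^ 2 + m2 ^ 2 + m3 ^ 2 + m4 ^ 2
      - (m1 * m2 + m3 * m4) * t1 - (m2 * m3 + m1 * m4) * t2 - (m1 * m3 + m2 * m4) * t3
      - 4 = 0 := by
  subst hm1 hm2 hm3 hm4 ht1 ht2 ht3
  field_simp
  ring
end

section
/- Over ℂ, let M(w) = [[1,0],[0,−w]], U = [[1,0],[1,1]], L = [[1,0],[−1,1]], S = [[0,1],[−1,0]] (so S⁻¹ = [[0,−1],[1,0]]), as 2×2 matrices. Given nonzero complex numbers z₁₂, z₁₃, z₁₄, z₂₃, z₂₄, z₃₄, define h₁ = M(z₁₃)·U·M(z₁₄)·U·M(z₁₂)·U, h₂ = L·S·M(z₁₂)·U·M(z₂₄)·U·M(z₂₃)·S·L·S, h₃ = S⁻¹·U·M(z₂₃)·U·M(z₃₄)·U·M(z₁₃)·S, h₄ = M(z₁₃)·U·S⁻¹·U·M(z₃₄)·U·M(z₂₄)·U·M(z₁₄)·S⁻¹·L·M(z₁₃⁻¹). Then h₁·h₂·h₃·h₄ = −(z₁₂·z₁₃·z₁₄·z₂₃·z₂₄·z₃₄)·I, where I is the 2×2 identity matrix.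 In particular h₁·h₂·h₃·h₄ is a scalar multiple of the identity, so the closure constraint h₁h₂h₃h₄ = 1 holds in PSL(2,ℂ), and h₁·h₂·h₃·h₄ = I exactly when z₁₂z₁₃z₁₄z₂₃z₂₄z₃₄ = −1. -/
open Matrix Complex

/-- The snake-rule elementary matrix `M(w) = [[1,0],[0,−w]]`. -/
noncomputable def Mdiag (w : ℂ) : Matrix (Fin 2) (Fin 2) ℂ := !![1, 0; 0, -w]

/-- The snake-rule elementary matrix `U = [[1,0],[1,1]]`. -/
noncomputable def Umat : Matrix (Fin 2) (Fin 2) ℂ := !![1, 0; 1, 1]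

/-- The snake-rule elementary matrix `L = [[1,0],[−1,1]]`. -/
noncomputable def Lmat : Matrix (Fin 2) (Fin 2) ℂ := !![1, 0; -1, 1]

/-- The snake-rule elementary matrix `S = [[0,1],[−1,0]]`. -/
noncomputable def Smat : Matrix (Fin 2) (Fin 2) ℂ := !![0, 1; -1, 0]

/-- The inverse of `S` is `[[0,−1],[1,0]]`. -/
theorem Smat_inv : Smat⁻¹ = !![0, -1; 1, 0] :=
  Matrix.inv_eq_right_inv (by simp [Smat, Matrix.one_fin_two])

/-- `M(w)` and `M(w⁻¹)` are inverse to each other. -/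
theorem Mdiag_mul_Mdiag_inv {w : ℂ} (hw : w ≠ 0) : Mdiag w * Mdiag w⁻¹ = 1 := by
  simp [Mdiag, Matrix.one_fin_two, hw]

/-- The snake-rule holonomies `h₁, h₂, h₃, h₄` around the four holes of a 4-holed sphere
satisfy `h₁·h₂·h₃·h₄ = −(z₁₂z₁₃z₁₄z₂₃z₂₄z₃₄)·I`; in particular the product is the identity
matrix exactly when `z₁₂z₁₃z₁₄z₂₃z₂₄z₃₄ = −1`. -/
theorem four_holed_sphere_closure (z12 z13 z14 z23 z24 z34 : ℂ)
    (h12 : z12 ≠ 0) (h13 : z13 ≠ 0) (h14 : z14 ≠ 0)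
    (h23 : z23 ≠ 0) (h24 : z24 ≠ 0) (h34 : z34 ≠ 0)
    (h1 h2 h3 h4 : Matrix (Fin 2) (Fin 2) ℂ)
    (hh1 : h1 = Mdiag z13 * Umat * Mdiag z14 * Umat * Mdiag z12 * Umat)
    (hh2 : h2 = Lmat * Smat * Mdiag z12 * Umat * Mdiag z24 * Umat * Mdiag z23 * Smat * Lmat * Smat)
    (hh3 : h3 = Smat⁻¹ * Umat * Mdiag z23 * Umat * Mdiag z34 * Umat * Mdiag z13 * Smat)
    (hh4 : h4 = Mdiag z13 * Umat * Smat⁻¹ * Umat * Mdiag z34 * Umat * Mdiag z24 * Umat *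
      Mdiag z14 * Smat⁻¹ * Lmat * Mdiag z13⁻¹) :
    h1 * h2 * h3 * h4 =
      (-(z12 * z13 * z14 * z23 * z24 * z34)) • (1 : Matrix (Fin 2) (Fin 2) ℂ) ∧
    (h1 * h2 * h3 * h4 = 1 ↔ z12 * z13 * z14 * z23 * z24 * z34 = -1) := by
  have e1 : h1 = !![1, 0; -z13 + z13 * z14 - z12 * z13 * z14, -(z12 * z13 * z14)] := by
    rw [hh1]
    simp only [Mdiag, Umat, Matrix.mul_fin_two]
    ext i j; fin_cases i <;> fin_cases j <;> simp <;> ring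
  have e2 : h2 = !![z12 - z12 * z24, z12 - z12 * z24 + z12 * z23 * z24;
      1 - z12 + z12 * z24, 1 - z12 + z12 * z24 - z12 * z23 * z24] := by
    rw [hh2]
    simp only [Mdiag, Umat, Lmat, Smat, Matrix.mul_fin_two]
    ext i j; fin_cases i <;> fin_cases j <;> simp <;> ring
  have e3 : h3 = !![-(z13 * z23 * z34), -1 + z23 - z23 * z34; 0, 1] := by
    rw [hh3, Smat_inv]
    simp only [Mdiag, Umat, Smat, Matrix.mul_fin_two]
    ext i j; fin_cases i <;> fin_cases j <;> simp <;> ring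
  have e4 : h4 = !![-1 + z34 - z24 * z34 + z14 * z24 * z34, 1 - z34 + z24 * z34;
      -(z13 * z34) + z13 * z24 * z34 - z13 * z14 * z24 * z34, z13 * z34 - z13 * z24 * z34] *
      Mdiag z13⁻¹ := by
    rw [hh4, Smat_inv]
    congr 1
    simp only [Mdiag, Umat, Lmat, Matrix.mul_fin_two]
    ext i j; fin_cases i <;> fin_cases j <;> simp <;> ring
  have hprod : h1 * h2 * h3 * h4 =
      (-(z12 * z13 * z14 * z23 * z24 * z34)) • (1 : Matrix (Fin 2) (Fin 2) ℂ) := by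
    rw [e4, ← mul_assoc, ← Mdiag_mul_Mdiag_inv h13, ← smul_mul_assoc, e1, e2, e3]
    congr 1
    simp only [Mdiag, Matrix.mul_fin_two]
    ext i j; fin_cases i <;> fin_cases j <;> simp <;> ring
  refine ⟨hprod, ?_⟩
  rw [hprod, ← neg_eq_iff_eq_neg]
  refine ⟨fun h => ?_, fun h => by rw [h, one_smul]⟩
  simpa using congrFun (congrFun h 0) 0
end

section
/- Over ℂ, let M(w) = [[1,0],[0,−w]], U = [[1,0],[1,1]], L = [[1,0],[−1,1]], S = [[0,1],[−1,0]] (so S⁻¹ = [[0,−1],[1,0]]), as 2×2 matrices. Given nonzero complex numbers z₁₂, z₁₃, z₁₄, z₂₃, z₂₄, z₃₄, define h₁ = M(z₁₃)·U·M(z₁₄)·U·M(z₁₂)·U, h₂ = L·S·M(z₁₂)·U·M(z₂₄)·U·M(z₂₃)·S·L·S, h₃ = S⁻¹·U·M(z₂₃)·U·M(z₃₄)·U·M(z₁₃)·S, h₄ = M(z₁₃)·U·S⁻¹·U·M(z₃₄)·U·M(z₂₄)·U·M(z₁₄)·S⁻¹·L·M(z₁₃⁻¹). Then det h₁ = −z₁₂z₁₃z₁₄,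 det h₂ = −z₁₂z₂₃z₂₄, det h₃ = −z₁₃z₂₃z₃₄, det h₄ = −z₁₄z₂₄z₃₄, and tr h₁ = 1 − z₁₂z₁₃z₁₄, tr h₂ = 1 − z₁₂z₂₃z₂₄, tr h₃ = 1 − z₁₃z₂₃z₃₄, tr h₄ = z₁₄z₂₄z₃₄ − 1. Consequently, for any nonzero complex numbers λ₁, λ₂, λ₃, λ₄ with λ₁² = −z₁₂z₁₃z₁₄, λ₂² = −z₁₂z₂₃z₂₄, λ₃² = −z₁₃z₂₃z₃₄, λ₄² = −z₁₄z₂₄z₃₄, the rescaled matrices λᵢ⁻¹·hᵢ have determinant 1, with tr(λᵢ⁻¹hᵢ) = λᵢ + λᵢ⁻¹ for i = 1, 2, 3 and tr(λ₄⁻¹h₄) = −(λ₄ + λ₄⁻¹). -/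
open Matrix Complex

theorem det_inv_smul_eq_one {A : Matrix (Fin 2) (Fin 2) ℂ} {l : ℂ} (hl : l ≠ 0)
    (hA : A.det = l ^ 2) : (l⁻¹ • A).det = 1 := by
  rw [Matrix.det_smul, hA, Fintype.card_fin, ← mul_pow, inv_mul_cancel₀ hl, one_pow]

theorem trace_inv_smul_eq_add_inv {A : Matrix (Fin 2) (Fin 2) ℂ} {l : ℂ} (hl : l ≠ 0)
    (hA : A.trace = 1 + l ^ 2) : (l⁻¹ • A).trace = l + l⁻¹ := by
  rw [Matrix.trace_smul, hA, smul_eq_mul]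
  field_simp
  ring

theorem trace_inv_smul_eq_neg_add_inv {A : Matrix (Fin 2) (Fin 2) ℂ} {l : ℂ} (hl : l ≠ 0)
    (hA : A.trace = -(1 + l ^ 2)) : (l⁻¹ • A).trace = -(l + l⁻¹) := by
  rw [← trace_inv_smul_eq_add_inv (A := -A) hl (by rw [Matrix.trace_neg, hA, neg_neg]),
    smul_neg, Matrix.trace_neg, neg_neg]

/-- Determinants and traces of the snake-rule holonomies `h₁, h₂, h₃, h₄` around the four
holes of a 4-holed sphere, and of their `SL(2,ℂ)` rescalings `λᵢ⁻¹·hᵢ` by square roots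
`λᵢ² = det hᵢ`. -/
theorem four_holed_sphere_holonomy_traces (z12 z13 z14 z23 z24 z34 : ℂ)
    (h12 : z12 ≠ 0) (h13 : z13 ≠ 0) (h14 : z14 ≠ 0)
    (h23 : z23 ≠ 0) (h24 : z24 ≠ 0) (h34 : z34 ≠ 0)
    (h1 h2 h3 h4 : Matrix (Fin 2) (Fin 2) ℂ)
    (hh1 : h1 = Mdiag z13 * Umat * Mdiag z14 * Umat * Mdiag z12 * Umat)
    (hh2 : h2 = Lmat * Smat * Mdiag z12 * Umat * Mdiag z24 * Umat * Mdiag z23 * Smat * Lmat * Smat)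
    (hh3 : h3 = Smat⁻¹ * Umat * Mdiag z23 * Umat * Mdiag z34 * Umat * Mdiag z13 * Smat)
    (hh4 : h4 = Mdiag z13 * Umat * Smat⁻¹ * Umat * Mdiag z34 * Umat * Mdiag z24 * Umat *
      Mdiag z14 * Smat⁻¹ * Lmat * Mdiag z13⁻¹) :
    h1.det = -(z12 * z13 * z14) ∧ h2.det = -(z12 * z23 * z24) ∧
    h3.det = -(z13 * z23 * z34) ∧ h4.det = -(z14 * z24 * z34) ∧
    h1.trace = 1 - z12 * z13 * z14 ∧ h2.trace = 1 - z12 * z23 * z24 ∧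
    h3.trace = 1 - z13 * z23 * z34 ∧ h4.trace = z14 * z24 * z34 - 1 ∧
    (∀ l1 l2 l3 l4 : ℂ, l1 ≠ 0 → l2 ≠ 0 → l3 ≠ 0 → l4 ≠ 0 →
      l1 ^ 2 = -(z12 * z13 * z14) → l2 ^ 2 = -(z12 * z23 * z24) →
      l3 ^ 2 = -(z13 * z23 * z34) → l4 ^ 2 = -(z14 * z24 * z34) →
      (l1⁻¹ • h1).det = 1 ∧ (l2⁻¹ • h2).det = 1 ∧
      (l3⁻¹ • h3).det = 1 ∧ (l4⁻¹ • h4).det = 1 ∧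
      (l1⁻¹ • h1).trace = l1 + l1⁻¹ ∧ (l2⁻¹ • h2).trace = l2 + l2⁻¹ ∧
      (l3⁻¹ • h3).trace = l3 + l3⁻¹ ∧ (l4⁻¹ • h4).trace = -(l4 + l4⁻¹)) := by
  have d1 : h1.det = -(z12 * z13 * z14) := by
    simp [hh1, Mdiag, Umat]; ring
  have d2 : h2.det = -(z12 * z23 * z24) := by
    simp [hh2, Mdiag, Umat, Lmat, Smat]; ring
  have d3 : h3.det = -(z13 * z23 * z34) := by
    simp only [hh3, Smat_inv, Matrix.det_mul]
    simp [Mdiag, Umat, Smat]; ring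
  have d4 : h4.det = -(z14 * z24 * z34) := by
    simp only [hh4, Smat_inv, Matrix.det_mul]
    simp [Mdiag, Umat, Lmat]; field_simp
  have t1 : h1.trace = 1 - z12 * z13 * z14 := by
    simp [hh1, Mdiag, Umat, Matrix.trace_fin_two]; ring
  have t2 : h2.trace = 1 - z12 * z23 * z24 := by
    simp [hh2, Mdiag, Umat, Lmat, Smat, Matrix.trace_fin_two]; ring
  have t3 : h3.trace = 1 - z13 * z23 * z34 := by
    rw [hh3, Smat_inv]
    simp [Mdiag, Umat, Smat, Matrix.trace_fin_two]; ring
  have t4 : h4.trace = z14 * z24 * z34 - 1 := by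
    rw [hh4, Smat_inv]
    simp [Mdiag, Umat, Lmat, Matrix.trace_fin_two]; field_simp; ring
  refine ⟨d1, d2, d3, d4, t1, t2, t3, t4, ?_⟩
  intro l1 l2 l3 l4 n1 n2 n3 n4 e1 e2 e3 e4
  exact ⟨det_inv_smul_eq_one n1 (d1.trans e1.symm), det_inv_smul_eq_one n2 (d2.trans e2.symm),
    det_inv_smul_eq_one n3 (d3.trans e3.symm), det_inv_smul_eq_one n4 (d4.trans e4.symm),
    trace_inv_smul_eq_add_inv n1 (by rw [t1, e1, sub_eq_add_neg]),
    trace_inv_smul_eq_add_inv n2 (by rw [t2, e2, sub_eq_add_neg]),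
    trace_inv_smul_eq_add_inv n3 (by rw [t3, e3, sub_eq_add_neg]),
    trace_inv_smul_eq_neg_add_inv n4 (by rw [t4, e4]; ring)⟩
end

section
/- Let θ, φ be real numbers with sin θ ≠ 0, and let 𝔪₃, 𝔪₄, 𝔱₂, 𝔱₃ be real numbers. Set 𝔪₁ = 2, 𝔱₁ = 2·cos θ, and 𝔪₂ = 𝔱₁. Define c₁₂ = 𝔱₁² + 𝔪₁² + 𝔪₂² − 𝔱₁𝔪₁𝔪₂ − 4 and c₃₄ = 𝔱₁² + 𝔪₃² + 𝔪₄² − 𝔱₁𝔪₃𝔪₄ − 4. Suppose there exists a complex number r with r² = c₁₂·c₃₄ such that 2·cos φ · r = 𝔱₂·(𝔱₁² − 4) + 2·(𝔪₁𝔪₄ + 𝔪₂𝔪₃) − 𝔱₁·(𝔪₁𝔪₃ + 𝔪₂𝔪₄) and sin φ · r = (2𝔱₃ + 𝔱₁𝔱₂ − 𝔪₁𝔪₃ − 𝔪₂𝔪₄)·sin θ. Then c₁₂ = 0, 𝔱₂ = 𝔪₄, and 𝔱₃ = 𝔪₃, independently of φ. -/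
open Real

/-- In the degenerate limit `𝔪₁ = 2`, `𝔱₁ = 𝔪₂ = 2cos θ` (one geodesic edge of the curved
tetrahedron shrinking to a point), the Darboux-coordinate relations force `c₁₂ = 0`,
`𝔱₂ = 𝔪₄` and `𝔱₃ = 𝔪₃`, independently of the bending angle `φ`. -/
theorem trace_coordinates_degenerate_limit (θ φ m3 m4 t2 t3 : ℝ)
    (hθ : Real.sin θ ≠ 0)
    (m1 m2 t1 c12 c34 : ℝ)
    (hm1 : m1 = 2) (ht1 : t1 = 2 * Real.cos θ) (hm2 : m2 = t1)
    (hc12 : c12 = t1 ^ 2 + m1 ^ 2 + m2 ^ 2 - t1 * m1 * m2 - 4)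
    (hc34 : c34 = t1 ^ 2 + m3 ^ 2 + m4 ^ 2 - t1 * m3 * m4 - 4)
    (r : ℂ) (hr : r ^ 2 = ((c12 : ℂ)) * ((c34 : ℂ)))
    (heq1 : ((2 * Real.cos φ : ℝ) : ℂ) * r =
      ((t2 * (t1 ^ 2 - 4) + 2 * (m1 * m4 + m2 * m3) - t1 * (m1 * m3 + m2 * m4) : ℝ) : ℂ))
    (heq2 : ((Real.sin φ : ℝ) : ℂ) * r =
      ((2 * t3 + t1 * t2 - m1 * m3 - m2 * m4 : ℝ) : ℂ) * ((Real.sin θ : ℝ) : ℂ)) :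
    c12 = 0 ∧ t2 = m4 ∧ t3 = m3 := by
  have hc : c12 = 0 := by rw [hc12, hm2, hm1]; ring
  have hr0 : r = 0 := by simpa [hc] using hr
  rw [hr0, mul_zero] at heq1 heq2
  have hcos : t2 * (t1 ^ 2 - 4) + 2 * (m1 * m4 + m2 * m3) - t1 * (m1 * m3 + m2 * m4) = 0 := by
    exact_mod_cast heq1.symm
  have hsin : (2 * t3 + t1 * t2 - m1 * m3 - m2 * m4) * Real.sin θ = 0 := by
    exact_mod_cast heq2.symm
  have ht2 : t2 = m4 := by
    have hmul : Real.sin θ ^ 2 * (t2 - m4) = 0 := by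
      rw [Real.sin_sq]
      rw [hm2, hm1, ht1] at hcos
      linear_combination (-1 / 4) * hcos
    exact sub_eq_zero.mp ((mul_eq_zero.mp hmul).resolve_left (pow_ne_zero 2 hθ))
  refine ⟨hc, ht2, ?_⟩
  have hlin := (mul_eq_zero.mp hsin).resolve_right hθ
  rw [hm2, hm1, ht2] at hlin
  linear_combination hlin / 2
end

section
/- Let a₁, a₂, θ be real numbers and set 𝔪₁ = 2·cos a₁, 𝔪₂ = 2·cos a₂, 𝔱₁ = 2·cos θ, and c₁₂ = 𝔱₁² + 𝔪₁² + 𝔪₂² − 𝔱₁𝔪₁𝔪₂ − 4. Then c₁₂ = −4·(cos θ − cos(a₁ + a₂))·(cos(a₁ − a₂) − cos θ). Moreover, if a₁, a₂, θ ∈ [0, π], then c₁₂ ≤ 0 if and only if |a₁ − a₂| ≤ θ ≤ min(a₁ + a₂, 2π − (a₁ + a₂)). -/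
open Real

/-- For `p ≤ q`, the product `(x - p) * (q - x)` is nonnegative exactly on `[p, q]`. -/
theorem sub_mul_sub_nonneg_iff_of_le {p q x : ℝ} (hpq : p ≤ q) :
    0 ≤ (x - p) * (q - x) ↔ p ≤ x ∧ x ≤ q := by
  refine ⟨fun h => ⟨?_, ?_⟩, fun h => mul_nonneg (sub_nonneg.2 h.1) (sub_nonneg.2 h.2)⟩
  · by_contra! hx
    nlinarith [mul_pos (sub_pos.2 hx) (sub_pos.2 (hx.trans_le hpq))]
  · by_contra! hx
    nlinarith [mul_pos (sub_pos.2 hx) (sub_pos.2 (hpq.trans_lt hx))]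

theorem cos_min_two_pi_sub (s : ℝ) : cos (min s (2 * π - s)) = cos s := by
  rcases min_choice s (2 * π - s) with h | h
  · rw [h]
  · rw [h, cos_two_pi_sub]

theorem cos_add_le_cos_sub {a b : ℝ} (ha : a ∈ Set.Icc 0 π) (hb : b ∈ Set.Icc 0 π) :
    cos (a + b) ≤ cos (a - b) := by
  rw [cos_add, cos_sub]
  linarith [mul_nonneg (sin_nonneg_of_mem_Icc ha) (sin_nonneg_of_mem_Icc hb)]

/-- With `𝔪₁ = 2cos a₁`, `𝔪₂ = 2cos a₂`, `𝔱₁ = 2cos θ`, the quantity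
`c₁₂ = 𝔱₁² + 𝔪₁² + 𝔪₂² − 𝔱₁𝔪₁𝔪₂ − 4` factors as
`−4·(cos θ − cos(a₁+a₂))·(cos(a₁−a₂) − cos θ)`; moreover for `a₁, a₂, θ ∈ [0, π]` one has
`c₁₂ ≤ 0` iff `|a₁ − a₂| ≤ θ ≤ min(a₁+a₂, 2π − (a₁+a₂))`. -/
theorem c12_factorization_and_triangle_inequality (a1 a2 θ : ℝ)
    (m1 m2 t1 c12 : ℝ)
    (hm1 : m1 = 2 * Real.cos a1) (hm2 : m2 = 2 * Real.cos a2)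
    (ht1 : t1 = 2 * Real.cos θ)
    (hc : c12 = t1 ^ 2 + m1 ^ 2 + m2 ^ 2 - t1 * m1 * m2 - 4) :
    c12 = -4 * (Real.cos θ - Real.cos (a1 + a2)) * (Real.cos (a1 - a2) - Real.cos θ) ∧
    (a1 ∈ Set.Icc 0 π → a2 ∈ Set.Icc 0 π → θ ∈ Set.Icc 0 π →
      (c12 ≤ 0 ↔ |a1 - a2| ≤ θ ∧ θ ≤ min (a1 + a2) (2 * π - (a1 + a2)))) := by
  have hfac : c12 = -4 * (cos θ - cos (a1 + a2)) * (cos (a1 - a2) - cos θ) := by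
    subst hc hm1 hm2 ht1
    rw [cos_add, cos_sub]
    linear_combination
      4 * sin a2 ^ 2 * sin_sq_add_cos_sq a1 + (4 - 4 * cos a1 ^ 2) * sin_sq_add_cos_sq a2
  refine ⟨hfac, fun h1 h2 hθ => ?_⟩
  have hdiff : |a1 - a2| ∈ Set.Icc 0 π :=
    ⟨abs_nonneg _, abs_le.2 ⟨by linarith [h1.1, h2.2], by linarith [h1.2, h2.1]⟩⟩
  have hsum : min (a1 + a2) (2 * π - (a1 + a2)) ∈ Set.Icc 0 π := by
    refine ⟨le_min (by linarith [h1.1, h2.1]) (by linarith [h1.2, h2.2]), ?_⟩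
    linarith [min_le_left (a1 + a2) (2 * π - (a1 + a2)),
      min_le_right (a1 + a2) (2 * π - (a1 + a2))]
  have hsign : c12 ≤ 0 ↔ 0 ≤ (cos θ - cos (a1 + a2)) * (cos (a1 - a2) - cos θ) := by
    rw [hfac]
    constructor <;> intro h <;> linarith
  rw [hsign, sub_mul_sub_nonneg_iff_of_le (cos_add_le_cos_sub h1 h2), and_comm,
    ← cos_abs (a1 - a2), ← cos_min_two_pi_sub (a1 + a2),
    strictAntiOn_cos.le_iff_ge hθ hdiff, strictAntiOn_cos.le_iff_ge hsum hθ]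
end

section
/- For a positive integer k, real numbers x, y, and an integer m, the torus coherent state is ξ^k_{(x,y)}(m) = (2/k)^(1/4) · e^{i k x y/(4π)} · ∑_{p ∈ ℤ} exp(−(k/(4π))·(2πm/k − 2πp − x)²) · exp(i·(k/(2π))·y·(2πm/k − 2πp − x)); the series converges absolutely. Then for all integers m, m′: (k/(4π²)) · ∫₀^{2π} ∫₀^{2π} ξ^k_{(x,y)}(m) · conj(ξ^k_{(x,y)}(m′)) dx dy = 1 if k divides m − m′, and = 0 otherwise. -/
open Real

/-- The `p`-th term of the periodized-Gaussian series defining the torus coherent state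
`ξ^k_{(x,y)}(m)`. -/
noncomputable def xiTerm (k : ℕ) (x y : ℝ) (m : ℤ) (p : ℤ) : ℂ :=
  ((Real.exp (-((k : ℝ) / (4 * π)) * (2 * π * (m : ℝ) / (k : ℝ) - 2 * π * (p : ℝ) - x) ^ 2) : ℝ) : ℂ) *
    Complex.exp (Complex.I *
      ((((k : ℝ) / (2 * π)) * y * (2 * π * (m : ℝ) / (k : ℝ) - 2 * π * (p : ℝ) - x) : ℝ) : ℂ))

/-- The torus coherent state
`ξ^k_{(x,y)}(m) = (2/k)^(1/4) · e^{ikxy/(4π)} · ∑_{p∈ℤ} e^{−(k/(4π))(2πm/k − 2πp − x)²}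
· e^{i(k/(2π))y(2πm/k − 2πp − x)}`. -/
noncomputable def xi (k : ℕ) (x y : ℝ) (m : ℤ) : ℂ :=
  (((2 / (k : ℝ)) ^ ((1 : ℝ) / 4) : ℝ) : ℂ) *
    Complex.exp (Complex.I * (((k : ℝ) * x * y / (4 * π) : ℝ) : ℂ)) *
    ∑' p : ℤ, xiTerm k x y m p

open MeasureTheory

/-- A Gaussian is summable over any translate of the lattice `2πℤ`. -/
lemma summable_exp_neg_mul_sub_two_pi_mul_sq {b : ℝ} (hb : 0 < b) (c : ℝ) :
    Summable fun p : ℤ => Real.exp (-b * (c - 2 * π * p) ^ 2) := by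
  have h := ((summable_jacobiTheta₂_term_iff (⟨0, -(2 * b * c)⟩ : ℂ) ⟨0, 4 * π * b⟩).2
    (by positivity)).norm.mul_left (Real.exp (-b * c ^ 2))
  refine h.congr fun p => ?_
  rw [norm_jacobiTheta₂_term, ← Real.exp_add]
  congr 1
  ring

/-- Unfolding the integral over a period of a `2π`-periodized Gaussian. -/
lemma integral_tsum_exp_neg_mul_sub_two_pi_mul_sq {b : ℝ} (hb : 0 < b) (c : ℝ) :
    ∫ x in (0 : ℝ)..(2 * π), ∑' q : ℤ, Real.exp (-b * (c - 2 * π * q - x) ^ 2) = √(π / b) := by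
  set f : ℝ → ℝ := fun t => Real.exp (-b * (2 * π * t - c) ^ 2) with hf
  have hpi : (2 * π) ≠ 0 := by positivity
  have hf_int : Integrable f :=
    ((integrable_exp_neg_mul_sq hb).comp_sub_right c).comp_mul_left' hpi
  have hf_integral : ∫ t, f t = (2 * π)⁻¹ * √(π / b) := by
    rw [hf, Measure.integral_comp_mul_left (fun u => Real.exp (-b * (u - c) ^ 2)),
      integral_sub_right_eq_self (fun u => Real.exp (-b * u ^ 2)), integral_gaussian,
      abs_of_pos (by positivity), smul_eq_mul]
  have hsum := hf_int.hasSum_intervalIntegral_comp_add_int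
  have hswap := hasSum_integral_of_summable_integral_norm
    (μ := volume.restrict (Set.Ioc (0 : ℝ) 1)) (F := fun (n : ℤ) (t : ℝ) => f (t + n))
    (fun n => (hf_int.comp_add_right (n : ℝ)).integrableOn)
    (by
      refine hsum.summable.congr fun n => ?_
      rw [intervalIntegral.integral_of_le zero_le_one]
      simp [hf])
  have hunit : ∫ t in (0 : ℝ)..1, ∑' n : ℤ, f (t + n) = ∫ t, f t := by
    rw [intervalIntegral.integral_of_le zero_le_one]
    refine hswap.unique ?_
    simpa only [intervalIntegral.integral_of_le (zero_le_one (α := ℝ))] using hsum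
  have hscale := intervalIntegral.mul_integral_comp_mul_left (a := 0) (b := 1) (c := 2 * π)
    (f := fun x => ∑' q : ℤ, Real.exp (-b * (c - 2 * π * q - x) ^ 2))
  rw [mul_zero, mul_one] at hscale
  rw [← hscale, ← mul_inv_cancel_left₀ hpi √(π / b), ← hf_integral, ← hunit]
  congr 2 with t
  refine tsum_congr fun q => ?_
  simp only [hf]
  congr 1
  ring

/-- Orthogonality of the characters of the circle. -/
lemma integral_exp_I_mul_int_mul (n : ℤ) :
    ∫ y in (0 : ℝ)..(2 * π), Complex.exp (Complex.I * n * y) =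
      if n = 0 then (2 * π : ℂ) else 0 := by
  split_ifs with hn
  · simp [hn]
  · rw [integral_exp_mul_complex (by simp [hn])]
    have : Complex.exp (Complex.I * n * ((2 * π : ℝ) : ℂ)) = 1 := by
      rw [← Complex.exp_int_mul_two_pi_mul_I n]
      congr 1
      push_cast
      ring
    rw [this]
    simp

lemma norm_xiTerm (k : ℕ) (x y : ℝ) (m p : ℤ) :
    ‖xiTerm k x y m p‖ =
      Real.exp (-((k : ℝ) / (4 * π)) * (2 * π * m / k - 2 * π * p - x) ^ 2) := by
  rw [xiTerm, norm_mul, mul_comm Complex.I, Complex.norm_exp_ofReal_mul_I, mul_one,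
    Complex.norm_real, Real.norm_of_nonneg (Real.exp_pos _).le]

lemma summable_norm_xiTerm {k : ℕ} (hk : 0 < k) (x y : ℝ) (m : ℤ) :
    Summable fun p : ℤ => ‖xiTerm k x y m p‖ := by
  refine (summable_exp_neg_mul_sub_two_pi_mul_sq (b := k / (4 * π)) (by positivity)
    (2 * π * m / k - x)).congr fun p => ?_
  rw [norm_xiTerm]
  congr 1
  ring

lemma xiTerm_mul_conj_xiTerm {k : ℕ} (hk : 0 < k) (x y : ℝ) (m m' p q : ℤ) :
    xiTerm k x y m p * (starRingEnd ℂ) (xiTerm k x y m' q) =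
      ((‖xiTerm k x 0 m p‖ * ‖xiTerm k x 0 m' q‖ : ℝ) : ℂ) *
        Complex.exp (Complex.I * (m - m' - k * (p - q) : ℤ) * y) := by
  have hk' : (k : ℂ) ≠ 0 := by exact_mod_cast hk.ne'
  have hpi : (π : ℂ) ≠ 0 := by exact_mod_cast Real.pi_ne_zero
  rw [norm_xiTerm, norm_xiTerm, xiTerm, xiTerm, map_mul, Complex.conj_ofReal, ← Complex.exp_conj,
    map_mul, Complex.conj_I, Complex.conj_ofReal, mul_mul_mul_comm, ← Complex.ofReal_mul,
    ← Complex.exp_add]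
  congr 2
  push_cast
  field_simp
  ring

lemma xi_mul_conj_xi {k : ℕ} (hk : 0 < k) (x y : ℝ) (m m' : ℤ) :
    xi k x y m * (starRingEnd ℂ) (xi k x y m') =
      (√(2 / k) : ℝ) * ∑' z : ℤ × ℤ,
        xiTerm k x y m z.1 * (starRingEnd ℂ) (xiTerm k x y m' z.2) := by
  rw [← tsum_mul_tsum_of_summable_norm
    (g := fun q => (starRingEnd ℂ) (xiTerm k x y m' q)) (summable_norm_xiTerm hk x y m)
    (by simpa only [RCLike.norm_conj] using summable_norm_xiTerm hk x y m'), ← Complex.conj_tsum]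
  have hphase (t : ℝ) : Complex.exp (Complex.I * t) *
      (starRingEnd ℂ) (Complex.exp (Complex.I * t)) = 1 := by
    rw [← Complex.exp_conj, ← Complex.exp_add]
    simp
  have hnorm : (((2 / (k : ℝ)) ^ ((1 : ℝ) / 4) : ℝ) : ℂ) *
      (((2 / (k : ℝ)) ^ ((1 : ℝ) / 4) : ℝ) : ℂ) = (√(2 / k) : ℝ) := by
    rw [← Complex.ofReal_mul, ← Real.rpow_add (by positivity), Real.sqrt_eq_rpow]
    norm_num
  rw [xi, xi, map_mul, map_mul, Complex.conj_ofReal, mul_mul_mul_comm,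
    mul_mul_mul_comm _ (Complex.exp _), hphase, hnorm, mul_one]

/-- The integral in `y` only keeps the pairs of Gaussians with the same centre. -/
lemma integral_xi_mul_conj_xi {k : ℕ} (hk : 0 < k) (x : ℝ) (m m' : ℤ) :
    ∫ y in (0 : ℝ)..(2 * π), xi k x y m * (starRingEnd ℂ) (xi k x y m') =
      (√(2 / k) : ℝ) * ∑' z : ℤ × ℤ,
        ((‖xiTerm k x 0 m z.1‖ * ‖xiTerm k x 0 m' z.2‖ : ℝ) : ℂ) *
          if m - m' - k * (z.1 - z.2) = 0 then (2 * π : ℂ) else 0 := by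
  simp_rw [xi_mul_conj_xi hk, intervalIntegral.integral_const_mul]
  congr 1
  have hbound : Summable fun z : ℤ × ℤ => ‖xiTerm k x 0 m z.1‖ * ‖xiTerm k x 0 m' z.2‖ :=
    (summable_norm_xiTerm hk x 0 m).mul_of_nonneg (summable_norm_xiTerm hk x 0 m')
      (fun _ => norm_nonneg _) (fun _ => norm_nonneg _)
  have hle (z : ℤ × ℤ) (y : ℝ) :
      ‖xiTerm k x y m z.1 * (starRingEnd ℂ) (xiTerm k x y m' z.2)‖ ≤
        ‖xiTerm k x 0 m z.1‖ * ‖xiTerm k x 0 m' z.2‖ := by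
    simp [norm_xiTerm]
  have hsum := intervalIntegral.hasSum_integral_of_dominated_convergence
    (μ := volume) (a := 0) (b := 2 * π)
    (F := fun (z : ℤ × ℤ) y => xiTerm k x y m z.1 * (starRingEnd ℂ) (xiTerm k x y m' z.2))
    (fun z _ => ‖xiTerm k x 0 m z.1‖ * ‖xiTerm k x 0 m' z.2‖)
    (fun z => by
      simp_rw [xiTerm_mul_conj_xiTerm hk]
      exact Continuous.aestronglyMeasurable (by fun_prop))
    (fun z => .of_forall fun y _ => hle z y)
    (.of_forall fun _ _ => hbound)
    intervalIntegrable_const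
    (.of_forall fun y _ => (hbound.of_norm_bounded (hle · y)).hasSum)
  rw [← hsum.tsum_eq]
  refine tsum_congr fun z => ?_
  simp_rw [xiTerm_mul_conj_xiTerm hk, intervalIntegral.integral_const_mul,
    integral_exp_I_mul_int_mul]

lemma integral_xi_mul_conj_xi_of_not_dvd {k : ℕ} (hk : 0 < k) (x : ℝ) {m m' : ℤ}
    (h : ¬ (k : ℤ) ∣ m - m') :
    ∫ y in (0 : ℝ)..(2 * π), xi k x y m * (starRingEnd ℂ) (xi k x y m') = 0 := by
  have hne (z : ℤ × ℤ) : m - m' - k * (z.1 - z.2) ≠ 0 := fun hz =>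
    h ⟨z.1 - z.2, sub_eq_zero.1 hz⟩
  simp [integral_xi_mul_conj_xi hk, hne]

lemma integral_xi_mul_conj_xi_of_dvd {k : ℕ} (hk : 0 < k) (x : ℝ) {m m' : ℤ}
    (h : (k : ℤ) ∣ m - m') :
    ∫ y in (0 : ℝ)..(2 * π), xi k x y m * (starRingEnd ℂ) (xi k x y m') =
      ((√(2 / k) * (2 * π) * ∑' q : ℤ,
        Real.exp (-(k / (2 * π)) * (2 * π * m' / k - 2 * π * q - x) ^ 2) : ℝ) : ℂ) := by
  obtain ⟨d, hd⟩ := h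
  have hinj : Function.Injective fun q : ℤ => (q + d, q) := fun a b hab => (Prod.ext_iff.1 hab).2
  have hk' : (k : ℝ) ≠ 0 := by exact_mod_cast hk.ne'
  have hm : (m : ℝ) = m' + k * d := by
    have : m = m' + k * d := by linarith
    exact_mod_cast this
  rw [integral_xi_mul_conj_xi hk, ← hinj.tsum_eq, Complex.ofReal_mul, Complex.ofReal_mul,
    mul_assoc, Complex.ofReal_tsum, ← tsum_mul_left (a := ((2 * π : ℝ) : ℂ))]
  · congr 1
    refine tsum_congr fun q => ?_
    rw [if_pos (by rw [hd]; ring), norm_xiTerm, norm_xiTerm, ← Real.exp_add, mul_comm]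
    have hexp : -((k : ℝ) / (4 * π)) * (2 * π * m / k - 2 * π * (q + d : ℤ) - x) ^ 2 +
        -((k : ℝ) / (4 * π)) * (2 * π * m' / k - 2 * π * q - x) ^ 2 =
        -(k / (2 * π)) * (2 * π * m' / k - 2 * π * q - x) ^ 2 := by
      have hcentre : 2 * π * m / k - 2 * π * (q + d : ℤ) - x = 2 * π * m' / k - 2 * π * q - x := by
        rw [hm]
        push_cast
        field_simp
        ring
      rw [hcentre]
      field_simp
      ring
    rw [hexp]
    push_cast
    rfl
  · rintro ⟨p, q⟩ hz
    have hz : m - m' - k * (p - q) = 0 := by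
      by_contra hne
      simp [hne] at hz
    have hpq : d = p - q := by
      rw [hd, sub_eq_zero] at hz
      exact mul_left_cancel₀ (by exact_mod_cast hk.ne') hz
    exact ⟨q, by simp [hpq]⟩

/-- The series defining `ξ^k_{(x,y)}(m)` converges absolutely, and the torus coherent states
satisfy the over-completeness relation
`(k/(4π²)) ∫₀^{2π} ∫₀^{2π} ξ^k_{(x,y)}(m)·conj(ξ^k_{(x,y)}(m′)) dx dy = δ_{k ∣ m−m′}`. -/
theorem xi_overcompleteness (k : ℕ) (hk : 0 < k) (m m' : ℤ) :
    (∀ (x y : ℝ) (m₀ : ℤ), Summable fun p : ℤ => ‖xiTerm k x y m₀ p‖) ∧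
    ((k : ℂ) / (4 * (π : ℂ) ^ 2)) *
        (∫ x in (0 : ℝ)..(2 * π), ∫ y in (0 : ℝ)..(2 * π),
          xi k x y m * (starRingEnd ℂ) (xi k x y m')) =
      (if (k : ℤ) ∣ (m - m') then 1 else 0) := by
  refine ⟨summable_norm_xiTerm hk, ?_⟩
  split_ifs with h
  · simp_rw [integral_xi_mul_conj_xi_of_dvd hk _ h]
    rw [intervalIntegral.integral_ofReal, intervalIntegral.integral_const_mul,
      integral_tsum_exp_neg_mul_sub_two_pi_mul_sq (by positivity)]
    have hsqrt : √(2 / k : ℝ) * √(π / (k / (2 * π))) = 2 * π / k := by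
      rw [← Real.sqrt_mul (by positivity),
        show 2 / (k : ℝ) * (π / (k / (2 * π))) = (2 * π / k) ^ 2 by field_simp,
        Real.sqrt_sq (by positivity)]
    rw [mul_right_comm, hsqrt]
    have hk' : (k : ℂ) ≠ 0 := by exact_mod_cast hk.ne'
    have hpi : (π : ℂ) ≠ 0 := by exact_mod_cast Real.pi_ne_zero
    push_cast
    field_simp
    norm_num
  · simp_rw [integral_xi_mul_conj_xi_of_not_dvd hk _ h]
    simp
end

section
/- For a positive integer k, real numbers x, y, and an integer m, the torus coherent state is ξ^k_{(x,y)}(m) = (2/k)^(1/4) · e^{i k x y/(4π)} · ∑_{p ∈ ℤ} exp(−(k/(4π))·(2πm/k − 2πp − x)²) · exp(i·(k/(2π))·y·(2πm/k − 2πp − x)); the series converges absolutely. Then for every fixed pair of real numbers (x, y), the limit as k → ∞ (over positive integers) of ∑_{m=0}^{k−1} |ξ^k_{(x,y)}(m)|² equals 1. -/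
open Real Filter

/-- The sum of `exp (-π s n²)` over the nonzero integers `n`. -/
noncomputable def gaussianTail (s : ℝ) : ℝ :=
  ∑' n : ℤ, if n = 0 then 0 else Real.exp (-π * s * (n : ℝ) ^ 2)

lemma summable_exp_neg_mul_int_sub_sq {a : ℝ} (ha : 0 < a) (u : ℝ) :
    Summable fun n : ℤ => Real.exp (-π * a * ((n : ℝ) - u) ^ 2) := by
  refine (summable_pow_mul_jacobiTheta₂_term_bound (a * |u|) ha 0).of_nonneg_of_le
    (fun n => (Real.exp_pos _).le) fun n => ?_
  rw [pow_zero, one_mul, Real.exp_le_exp]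
  have h : (n : ℝ) * u ≤ |(n : ℝ)| * |u| := by rw [← abs_mul]; exact le_abs_self _
  have h' : a * (n : ℝ) ^ 2 - 2 * (a * |u|) * |(n : ℝ)| ≤ a * ((n : ℝ) - u) ^ 2 := by
    nlinarith [mul_le_mul_of_nonneg_left h ha.le, mul_nonneg ha.le (sq_nonneg u)]
  push_cast
  nlinarith [mul_le_mul_of_nonneg_left h' Real.pi_pos.le]

lemma summable_exp_neg_mul_int_sq {s : ℝ} (hs : 0 < s) :
    Summable fun n : ℤ => Real.exp (-π * s * (n : ℝ) ^ 2) := by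
  simpa using summable_exp_neg_mul_int_sub_sq hs 0

lemma summable_gaussianTail {s : ℝ} (hs : 0 < s) :
    Summable fun n : ℤ => if n = 0 then 0 else Real.exp (-π * s * (n : ℝ) ^ 2) := by
  refine (summable_exp_neg_mul_int_sq hs).of_nonneg_of_le (fun n => ?_) fun n => ?_
  · split_ifs <;> positivity
  · split_ifs
    · positivity
    · exact le_rfl

lemma gaussianTail_nonneg (s : ℝ) : 0 ≤ gaussianTail s :=
  tsum_nonneg fun n => by split_ifs <;> positivity

lemma gaussianTail_le {s : ℝ} (hs : 1 ≤ s) :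
    gaussianTail s ≤
      Real.exp (-π * (s - 1)) * ∑' n : ℤ, Real.exp (-π * 1 * (n : ℝ) ^ 2) := by
  rw [gaussianTail, ← tsum_mul_left]
  refine (summable_gaussianTail (by linarith)).tsum_le_tsum (fun n => ?_)
    ((summable_exp_neg_mul_int_sq one_pos).mul_left _)
  split_ifs with hn
  · positivity
  · rw [← Real.exp_add, Real.exp_le_exp]
    have h1 : (1 : ℝ) ≤ (n : ℝ) ^ 2 := by
      have : (1 : ℤ) ≤ n ^ 2 := by have := sq_pos_of_ne_zero hn; omega
      exact_mod_cast this
    nlinarith [mul_nonneg Real.pi_pos.le (mul_nonneg (sub_nonneg.2 hs) (sub_nonneg.2 h1))]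

lemma tendsto_gaussianTail_atTop : Tendsto gaussianTail atTop (nhds 0) := by
  have h : Tendsto (fun s : ℝ => Real.exp (-π * (s - 1)) *
      ∑' n : ℤ, Real.exp (-π * 1 * (n : ℝ) ^ 2)) atTop (nhds 0) := by
    rw [← zero_mul (∑' n : ℤ, Real.exp (-π * 1 * (n : ℝ) ^ 2))]
    refine (Real.tendsto_exp_atBot.comp ?_).mul_const _
    exact (tendsto_atTop_add_const_right _ (-1) tendsto_id).const_mul_atTop_of_neg
      (neg_lt_zero.2 Real.pi_pos)
  exact squeeze_zero' (Eventually.of_forall gaussianTail_nonneg)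
    ((eventually_ge_atTop 1).mono fun s hs => gaussianTail_le hs) h

/-- By Poisson summation, a Riemann sum of a wide Gaussian is exponentially close to its
integral. -/
lemma abs_sqrt_mul_tsum_gaussian_sub_one_le {a : ℝ} (ha : 0 < a) (u : ℝ) :
    |√a * ∑' n : ℤ, Real.exp (-π * a * ((n : ℝ) - u) ^ 2) - 1| ≤ gaussianTail a⁻¹ := by
  have ha' : 0 < a⁻¹ := inv_pos.2 ha
  have hsqrt : (1 : ℂ) / ((a⁻¹ : ℝ) : ℂ) ^ (1 / 2 : ℂ) = (√a : ℝ) := by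
    have : (1 / 2 : ℂ) = ((1 / 2 : ℝ) : ℂ) := by push_cast; rfl
    rw [this, ← Complex.ofReal_cpow ha'.le, ← Real.sqrt_eq_rpow, Real.sqrt_inv]
    push_cast
    rw [one_div, inv_inv]
  have hnorm (n : ℤ) : ‖Complex.exp (-π * (a⁻¹ : ℝ) * n ^ 2 + 2 * π * (Complex.I * u) * n)‖ =
      Real.exp (-π * a⁻¹ * (n : ℝ) ^ 2) := by
    rw [show (-π * (a⁻¹ : ℝ) * n ^ 2 + 2 * π * (Complex.I * u) * n : ℂ) =
      ((-π * a⁻¹ * (n : ℝ) ^ 2 : ℝ) : ℂ) + ((2 * π * u * n : ℝ) : ℂ) * Complex.I by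
        push_cast; ring, Complex.exp_add, norm_mul, Complex.norm_exp_ofReal_mul_I, mul_one,
      Complex.norm_exp_ofReal]
  have hsum : Summable fun n : ℤ =>
      Complex.exp (-π * (a⁻¹ : ℝ) * n ^ 2 + 2 * π * (Complex.I * u) * n) := by
    refine Summable.of_norm ?_
    simpa only [hnorm] using summable_exp_neg_mul_int_sq ha'
  have hP := Complex.tsum_exp_neg_quadratic (a := ((a⁻¹ : ℝ) : ℂ))
    (by rwa [Complex.ofReal_re]) (Complex.I * u)
  have hreal : ∑' n : ℤ, Complex.exp (-π / ((a⁻¹ : ℝ) : ℂ) * (n + Complex.I * (Complex.I * u)) ^ 2)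
      = ((∑' n : ℤ, Real.exp (-π * a * ((n : ℝ) - u) ^ 2) : ℝ) : ℂ) := by
    rw [Complex.ofReal_tsum]
    refine tsum_congr fun n => ?_
    rw [← mul_assoc, Complex.I_mul_I]
    push_cast
    rw [div_inv_eq_mul]
    ring_nf
  rw [hsqrt, hreal, hsum.tsum_eq_add_tsum_ite 0] at hP
  rw [← Real.norm_eq_abs, ← Complex.norm_real, Complex.ofReal_sub, Complex.ofReal_mul, ← hP]
  have hterm (n : ℤ) : ‖if n = 0 then (0 : ℂ) else
      Complex.exp (-π * (a⁻¹ : ℝ) * n ^ 2 + 2 * π * (Complex.I * u) * n)‖ =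
      if n = 0 then 0 else Real.exp (-π * a⁻¹ * (n : ℝ) ^ 2) := by
    split_ifs
    · exact norm_zero
    · exact hnorm n
  have hzero : Complex.exp (-π * (a⁻¹ : ℝ) * ((0 : ℤ) : ℂ) ^ 2 +
      2 * π * (Complex.I * u) * ((0 : ℤ) : ℂ)) = 1 := by simp
  rw [hzero, Complex.ofReal_one, add_sub_cancel_left]
  refine tsum_of_norm_bounded (summable_gaussianTail ha').hasSum fun n => (hterm n).le

section Periodization

variable {E : Type*} [NormedAddCommGroup E] {k : ℕ}

lemma injective_sub_mul (hk : 0 < k) (n : ℤ) : Function.Injective fun p : ℤ => n - k * p := by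
  intro p q h
  have hk' : (k : ℤ) ≠ 0 := by exact_mod_cast hk.ne'
  exact mul_left_cancel₀ hk' (sub_right_injective h)

lemma sum_range_tsum_sub_mul [CompleteSpace E] {f : ℤ → E} (hf : Summable f) (hk : 0 < k) :
    ∑ m ∈ Finset.range k, ∑' p : ℤ, f (m - k * p) = ∑' n : ℤ, f n := by
  have : NeZero k := ⟨hk.ne'⟩
  let e : Fin k × ℤ ≃ ℤ :=
    ((Equiv.refl _).prodCongr (Equiv.neg ℤ)).trans
      ((Equiv.prodComm _ _).trans (Int.divModEquiv k).symm)
  have he (m : Fin k) (p : ℤ) : e (m, p) = m - k * p := by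
    simp only [e, Equiv.trans_apply, Equiv.prodCongr_apply, Prod.map_apply, Equiv.refl_apply,
      Equiv.neg_apply, Equiv.prodComm_apply, Prod.swap_prod_mk, Int.divModEquiv_symm_apply]
    ring
  have hfe : Summable fun c => f (e c) := e.summable_iff.2 hf
  rw [← e.tsum_eq f, hfe.tsum_prod, tsum_fintype, Finset.sum_range]
  simp only [he]

lemma tsum_sub_mul_periodic (f : ℤ → E) (m p : ℤ) :
    ∑' q : ℤ, f (m - k * p - k * q) = ∑' q : ℤ, f (m - k * q) := by
  rw [← (Equiv.addLeft p).tsum_eq fun q => f (m - k * q)]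
  refine tsum_congr fun q => congrArg f ?_
  simp only [Equiv.coe_addLeft]
  ring

/-- The squared norm of a periodization over one period differs from the squared norm of the
original function by at most the size of the overlaps between distinct translates. -/
lemma abs_sum_norm_sq_periodization_sub_le {f : ℤ → ℂ} (hf : Summable fun n => ‖f n‖)
    (hk : 0 < k) {a b : ℤ → ℝ} (ha : Summable a) (hb : Summable b) (hb0 : 0 ≤ b 0)
    (ha0 : ∀ n, 0 ≤ a n)
    (hab : ∀ n d, d ≠ 0 → ‖f n‖ * ‖f (n - k * d)‖ ≤ a n * b d) :
    |∑ m ∈ Finset.range k, ‖∑' p : ℤ, f (m - k * p)‖ ^ 2 - ∑' n : ℤ, ‖f n‖ ^ 2| ≤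
      (∑' n, a n) * ∑' d, b d := by
  let F : ℤ → ℂ := fun n => ∑' p : ℤ, f (n - k * p)
  have hfs (n : ℤ) : Summable fun p : ℤ => ‖f (n - k * p)‖ :=
    hf.comp_injective (injective_sub_mul hk n)
  have hFle (n : ℤ) : ‖F n‖ ≤ ∑' n, ‖f n‖ :=
    (norm_tsum_le_tsum_norm (hfs n)).trans
      ((hfs n).tsum_le_tsum_of_inj _ (injective_sub_mul hk n) (fun _ _ => norm_nonneg _)
        (fun _ => le_rfl) hf)
  have hfle (n : ℤ) : ‖f n‖ ≤ ∑' n, ‖f n‖ := hf.le_tsum n fun _ _ => norm_nonneg _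
  have hfF : Summable fun n => f n * starRingEnd ℂ (F n) := by
    refine (hf.mul_right (∑' n, ‖f n‖)).of_norm_bounded fun n => ?_
    rw [norm_mul, RCLike.norm_conj]
    exact mul_le_mul_of_nonneg_left (hFle n) (norm_nonneg _)
  have hff : Summable fun n => f n * starRingEnd ℂ (f n) := by
    refine (hf.mul_right (∑' n, ‖f n‖)).of_norm_bounded fun n => ?_
    rw [norm_mul, RCLike.norm_conj]
    exact mul_le_mul_of_nonneg_left (hfle n) (norm_nonneg _)
  have hcast : ((∑ m ∈ Finset.range k, ‖F m‖ ^ 2 - ∑' n : ℤ, ‖f n‖ ^ 2 : ℝ) : ℂ) =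
      ∑' n, f n * starRingEnd ℂ (F n - f n) := by
    have h1 : ∑ m ∈ Finset.range k, ((‖F m‖ ^ 2 : ℝ) : ℂ) =
        ∑' n, f n * starRingEnd ℂ (F n) := by
      rw [← sum_range_tsum_sub_mul hfF hk]
      refine Finset.sum_congr rfl fun m _ => ?_
      have hper (p : ℤ) : F (m - k * p) = F m := tsum_sub_mul_periodic f m p
      simp only [hper]
      rw [tsum_mul_right, Complex.ofReal_pow, ← Complex.mul_conj']
    have h2 : ((∑' n : ℤ, ‖f n‖ ^ 2 : ℝ) : ℂ) = ∑' n, f n * starRingEnd ℂ (f n) := by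
      rw [Complex.ofReal_tsum]
      exact tsum_congr fun n => by rw [Complex.ofReal_pow, ← Complex.mul_conj']
    rw [Complex.ofReal_sub, Complex.ofReal_sum, h1, h2, ← hfF.tsum_sub hff]
    exact tsum_congr fun n => by rw [map_sub, mul_sub]
  change |∑ m ∈ Finset.range k, ‖F m‖ ^ 2 - ∑' n : ℤ, ‖f n‖ ^ 2| ≤ _
  rw [← Real.norm_eq_abs, ← Complex.norm_real, hcast]
  refine tsum_of_norm_bounded (ha.hasSum.mul_right _) fun n => ?_
  have hdiff : F n - f n = ∑' d : ℤ, if d = 0 then 0 else f (n - k * d) := by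
    simp only [F]
    rw [(hfs n).of_norm.tsum_eq_add_tsum_ite 0]
    simp
  rw [norm_mul, RCLike.norm_conj, ← norm_mul, hdiff, ← tsum_mul_left]
  refine tsum_of_norm_bounded (hb.hasSum.mul_left _) fun d => ?_
  split_ifs with hd
  · simpa [hd] using mul_nonneg (ha0 n) hb0
  · rw [norm_mul]
    exact hab n d hd

end Periodization

/-- A Gaussian wave packet on `ℤ` of width `√k`, centred at `u` and of frequency `y`. -/
noncomputable def wavePacket (k : ℕ) (u y : ℝ) (n : ℤ) : ℂ :=
  (Real.exp (-π * (k : ℝ)⁻¹ * ((n : ℝ) - u) ^ 2) : ℝ) *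
    Complex.exp (Complex.I * ((y * ((n : ℝ) - u) : ℝ) : ℂ))

lemma norm_wavePacket (k : ℕ) (u y : ℝ) (n : ℤ) :
    ‖wavePacket k u y n‖ = Real.exp (-π * (k : ℝ)⁻¹ * ((n : ℝ) - u) ^ 2) := by
  rw [wavePacket, norm_mul, mul_comm Complex.I, Complex.norm_exp_ofReal_mul_I, mul_one,
    Complex.norm_real, Real.norm_of_nonneg (Real.exp_pos _).le]

lemma summable_norm_wavePacket {k : ℕ} (hk : 0 < k) (u y : ℝ) :
    Summable fun n => ‖wavePacket k u y n‖ := by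
  simp only [norm_wavePacket]
  exact summable_exp_neg_mul_int_sub_sq (by positivity) u

lemma norm_wavePacket_mul_norm_wavePacket_le {k : ℕ} (hk : 0 < k) (u y : ℝ) (n d : ℤ) :
    ‖wavePacket k u y n‖ * ‖wavePacket k u y (n - k * d)‖ ≤
      Real.exp (-π * (2 * k : ℝ)⁻¹ * ((n : ℝ) - u) ^ 2) *
        Real.exp (-π * (k / 3) * (d : ℝ) ^ 2) := by
  have hk' : (0 : ℝ) < k := by exact_mod_cast hk
  rw [norm_wavePacket, norm_wavePacket, ← Real.exp_add, ← Real.exp_add, Real.exp_le_exp,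
    ← sub_nonneg]
  push_cast
  have h : -π * (2 * k : ℝ)⁻¹ * ((n : ℝ) - u) ^ 2 + -π * (k / 3) * (d : ℝ) ^ 2 -
      (-π * (k : ℝ)⁻¹ * ((n : ℝ) - u) ^ 2 + -π * (k : ℝ)⁻¹ * ((n : ℝ) - k * d - u) ^ 2) =
      π * (k : ℝ)⁻¹ * (3 / 2) * ((n : ℝ) - u - 2 / 3 * (k * d)) ^ 2 := by
    field_simp
    ring
  rw [h]
  positivity

lemma xiTerm_eq_wavePacket {k : ℕ} (hk : 0 < k) (x y : ℝ) (m p : ℤ) :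
    xiTerm k x y m p = wavePacket k (k * x / (2 * π)) y (m - k * p) := by
  have hk' : (k : ℝ) ≠ 0 := by exact_mod_cast hk.ne'
  rw [xiTerm, wavePacket]
  have hexp : -((k : ℝ) / (4 * π)) * (2 * π * m / k - 2 * π * p - x) ^ 2 =
      -π * (k : ℝ)⁻¹ * (((m - k * p : ℤ) : ℝ) - k * x / (2 * π)) ^ 2 := by
    push_cast
    field_simp
    ring
  have hphase : (k : ℝ) / (2 * π) * y * (2 * π * m / k - 2 * π * p - x) =
      y * (((m - k * p : ℤ) : ℝ) - k * x / (2 * π)) := by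
    push_cast
    field_simp
  rw [hexp, hphase]

lemma norm_xi_sq {k : ℕ} (hk : 0 < k) (x y : ℝ) (m : ℤ) :
    ‖xi k x y m‖ ^ 2 =
      √(2 / k) * ‖∑' p : ℤ, wavePacket k (k * x / (2 * π)) y (m - k * p)‖ ^ 2 := by
  have h0 : (0 : ℝ) ≤ 2 / k := by positivity
  simp only [xi, xiTerm_eq_wavePacket hk]
  rw [norm_mul, norm_mul, mul_comm Complex.I, Complex.norm_exp_ofReal_mul_I, mul_one,
    Complex.norm_real, Real.norm_of_nonneg (by positivity), mul_pow, ← Real.rpow_natCast,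
    ← Real.rpow_mul h0, Real.sqrt_eq_rpow]
  norm_num

lemma abs_sum_norm_xi_sq_sub_one_le {k : ℕ} (hk : 0 < k) (x y : ℝ) :
    |∑ m ∈ Finset.range k, ‖xi k x y (m : ℤ)‖ ^ 2 - 1| ≤
      gaussianTail (k / 2) + 2 * (1 + gaussianTail (2 * k)) * gaussianTail (k / 3) := by
  have hk' : (0 : ℝ) < k := by exact_mod_cast hk
  set u : ℝ := k * x / (2 * π) with hu
  set D : ℝ := ∑' n : ℤ, ‖wavePacket k u y n‖ ^ 2
  set A : ℝ := ∑' n : ℤ, Real.exp (-π * (2 * k : ℝ)⁻¹ * ((n : ℝ) - u) ^ 2)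
  set S : ℝ := ∑ m ∈ Finset.range k, ‖∑' p : ℤ, wavePacket k u y (m - k * p)‖ ^ 2
  have hS : ∑ m ∈ Finset.range k, ‖xi k x y (m : ℤ)‖ ^ 2 = √(2 / k) * S := by
    simp only [norm_xi_sq hk, ← hu, S, Finset.mul_sum]
  have hD : |√(2 / k) * D - 1| ≤ gaussianTail (k / 2) := by
    have hDeq : D = ∑' n : ℤ, Real.exp (-π * (2 / k) * ((n : ℝ) - u) ^ 2) := by
      refine tsum_congr fun n => ?_
      rw [norm_wavePacket, ← Real.exp_nat_mul]
      congr 1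
      push_cast
      ring
    simpa only [hDeq, inv_div] using
      abs_sqrt_mul_tsum_gaussian_sub_one_le (a := 2 / k) (by positivity) u
  have hA : √(2 / k) * A ≤ 2 * (1 + gaussianTail (2 * k)) := by
    have h := abs_sqrt_mul_tsum_gaussian_sub_one_le (a := (2 * k : ℝ)⁻¹) (by positivity) u
    rw [inv_inv] at h
    have hs : √(2 / (k : ℝ)) = 2 * √(2 * k : ℝ)⁻¹ := by
      rw [show (2 / k : ℝ) = 2 ^ 2 * (2 * k : ℝ)⁻¹ by field_simp,
        Real.sqrt_mul (by norm_num), Real.sqrt_sq (by norm_num)]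
    rw [hs, mul_assoc]
    linarith [(abs_le.1 h).2]
  have hSD : |S - D| ≤ A * gaussianTail (k / 3) := by
    refine abs_sum_norm_sq_periodization_sub_le (summable_norm_wavePacket hk u y) hk
      (summable_exp_neg_mul_int_sub_sq (by positivity) u)
      (summable_gaussianTail (by positivity)) (by simp) (fun n => (Real.exp_pos _).le)
      fun n d hd => ?_
    rw [if_neg hd]
    exact norm_wavePacket_mul_norm_wavePacket_le hk u y n d
  have hoff : |√(2 / k) * (S - D)| ≤ 2 * (1 + gaussianTail (2 * k)) * gaussianTail (k / 3) := by
    rw [abs_mul, abs_of_nonneg (Real.sqrt_nonneg _)]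
    calc √(2 / k) * |S - D| ≤ √(2 / k) * (A * gaussianTail (k / 3)) := by gcongr
      _ = √(2 / k) * A * gaussianTail (k / 3) := by ring
      _ ≤ _ := mul_le_mul_of_nonneg_right hA (gaussianTail_nonneg _)
  rw [hS, show √(2 / k) * S - 1 = (√(2 / k) * D - 1) + √(2 / k) * (S - D) by ring]
  exact (abs_add_le _ _).trans (add_le_add hD hoff)

/-- The series defining `ξ^k_{(x,y)}` converges absolutely and, for every fixed `(x,y)`, the
torus coherent state becomes normalized in the large-`k` limit:
`∑_{m=0}^{k−1} |ξ^k_{(x,y)}(m)|² → 1` as `k → ∞` over positive integers. -/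
theorem xi_norm_tendsto_one (x y : ℝ) :
    (∀ k : ℕ, 0 < k → ∀ m : ℤ, Summable fun p : ℤ => ‖xiTerm k x y m p‖) ∧
    Tendsto (fun k : ℕ => ∑ m ∈ Finset.range k, ‖xi k x y (m : ℤ)‖ ^ 2)
      atTop (nhds 1) := by
  refine ⟨fun k hk m => ?_, ?_⟩
  · simp only [xiTerm_eq_wavePacket hk]
    exact (summable_norm_wavePacket hk _ y).comp_injective (injective_sub_mul hk m)
  · have hk : Tendsto (fun k : ℕ => (k : ℝ)) atTop atTop := tendsto_natCast_atTop_atTop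
    have h2 := tendsto_gaussianTail_atTop.comp (hk.atTop_div_const (r := 2) (by norm_num))
    have h3 := tendsto_gaussianTail_atTop.comp (hk.atTop_div_const (r := 3) (by norm_num))
    have h4 := tendsto_gaussianTail_atTop.comp (hk.const_mul_atTop (r := 2) (by norm_num))
    have hlim := h2.add (((h4.const_add 1).const_mul 2).mul h3)
    rw [mul_zero, add_zero] at hlim
    rw [tendsto_iff_dist_tendsto_zero]
    exact squeeze_zero' (Eventually.of_forall fun k => dist_nonneg)
      ((eventually_gt_atTop 0).mono fun k hk => abs_sum_norm_xi_sq_sub_one_le hk x y) hlim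
end

section
/- Let f : ℝ → ℂ be a Schwartz function, let k be a positive integer, and let α be a real number with |α| < 1/2. Then the symmetric partial sums ∑_{p=−P}^{P} e^{2πi·p·(α−1/2)} · ∫₀^{k} f(t + α − 1/2) · e^{2πi·p·t} dt converge as P → ∞, and their limit equals ∑_{n=0}^{k−1} f(n). -/
open Real Filter

/-- **Riemann–Lebesgue lemma** on a bounded interval, for the characters `t ↦ e^{2πiwt}`. -/
theorem tendsto_intervalIntegral_mul_exp_cocompact (h : ℝ → ℂ) {a b : ℝ} (hab : a ≤ b) :
    Tendsto (fun w : ℝ => ∫ t in a..b, h t * Complex.exp (2 * (π : ℂ) * Complex.I * w * t))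
      (cocompact ℝ) (nhds 0) := by
  have key := (Real.tendsto_integral_exp_smul_cocompact ((Set.Ioc a b).indicator h)).comp
    (Homeomorph.neg ℝ).isClosedEmbedding.tendsto_cocompact
  refine key.congr fun w => ?_
  rw [intervalIntegral.integral_of_le hab, ← MeasureTheory.integral_indicator measurableSet_Ioc]
  refine MeasureTheory.integral_congr_ae (Eventually.of_forall fun t => ?_)
  by_cases ht : t ∈ Set.Ioc a b
  · simp only [Set.indicator_of_mem ht, Circle.smul_def, Real.fourierChar_apply, smul_eq_mul,
      Homeomorph.coe_neg]
    rw [mul_comm]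
    congr 2
    push_cast
    ring
  · simp [Set.indicator_of_notMem ht]

/-- `e^{2πit} ≠ 1` for `0 < |t| < 1`. -/
theorem exp_two_pi_I_mul_ne_one {t : ℝ} (ht0 : t ≠ 0) (ht : |t| < 1) :
    Complex.exp (2 * (π : ℂ) * Complex.I * t) ≠ 1 := by
  rw [Ne, Complex.exp_eq_one_iff]
  rintro ⟨n, hn⟩
  have hn' : (t : ℂ) = n := by
    apply mul_left_cancel₀ Complex.two_pi_I_ne_zero
    rw [hn, mul_comm]
  have htn : t = n := by exact_mod_cast hn'
  subst htn
  have : |n| < 1 := by exact_mod_cast ht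
  exact ht0 (by simpa using Int.abs_lt_one_iff.mp this)

/-- A function differentiable at `0` factors as `g t = g 0 + (e^{2πit} - 1) h t` with `h` continuous
on `[a, a + 1]`, provided `0` is the only integer in that interval. -/
theorem exists_continuousOn_eq_add_exp_sub_one_mul {g : ℝ → ℂ} (hg : Continuous g)
    (hg0 : DifferentiableAt ℝ g 0) {a : ℝ} (ha : -1 < a) (ha0 : a < 0) :
    ∃ h : ℝ → ℂ, ContinuousOn h (Set.Icc a (a + 1)) ∧ ∀ t ∈ Set.Icc a (a + 1),
      g t = g 0 + (Complex.exp (2 * (π : ℂ) * Complex.I * t) - 1) * h t := by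
  set E : ℝ → ℂ := fun t => Complex.exp (2 * (π : ℂ) * Complex.I * t) with hE
  have hE' : HasDerivAt E (2 * (π : ℂ) * Complex.I) 0 := by
    have h1 : HasDerivAt (fun t : ℝ => 2 * (π : ℂ) * Complex.I * (t : ℂ))
        (2 * (π : ℂ) * Complex.I) 0 := by
      simpa using (Complex.ofRealCLM.hasDerivAt (x := (0 : ℝ))).const_mul
        (2 * (π : ℂ) * Complex.I)
    simpa using h1.cexp
  have hE0 : E 0 = 1 := by simp [hE]
  have hEc : Continuous E := by fun_prop
  have hcont : ∀ {u : ℝ → ℂ}, Continuous u → DifferentiableAt ℝ u 0 →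
      Continuous (dslope u 0) := fun {u} hu hu0 => by
    rw [← continuousOn_univ]
    exact (continuousOn_dslope univ_mem).2 ⟨hu.continuousOn, hu0⟩
  have hne : ∀ t ∈ Set.Icc a (a + 1), dslope E 0 t ≠ 0 := by
    intro t ht
    rcases eq_or_ne t 0 with rfl | ht0
    · rw [dslope_same, hE'.deriv]
      exact Complex.two_pi_I_ne_zero
    · rw [dslope_of_ne _ ht0, slope_def_module, hE0]
      refine smul_ne_zero (by simpa using ht0) (sub_ne_zero.2 ?_)
      exact exp_two_pi_I_mul_ne_one ht0 (abs_lt.2 ⟨by linarith [ht.1], by linarith [ht.2]⟩)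
  refine ⟨fun t => dslope g 0 t / dslope E 0 t,
    (hcont hg hg0).continuousOn.div (hcont hEc hE'.differentiableAt).continuousOn hne,
    fun t ht => ?_⟩
  have hgt := sub_smul_dslope g 0 t
  have hEt := sub_smul_dslope E 0 t
  rw [hE0] at hEt
  change _ = _ + (E t - 1) * _
  rw [← hEt, smul_mul_assoc, mul_div_cancel₀ _ (hne t ht), hgt]
  ring

/-- Telescoping over a symmetric range of integers. -/
theorem sum_Icc_neg_sub_telescope {M : Type*} [AddCommGroup M] (u : ℤ → M) (P : ℕ) :
    ∑ p ∈ Finset.Icc (-(P : ℤ)) P, (u (p + 1) - u p) = u (P + 1) - u (-P) := by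
  induction P with
  | zero => simp
  | succ P ih =>
    have hset : Finset.Icc (-((P + 1 : ℕ) : ℤ)) ((P + 1 : ℕ) : ℤ) =
        insert (-(P : ℤ) - 1) (insert ((P : ℤ) + 1) (Finset.Icc (-(P : ℤ)) P)) := by
      ext x
      simp only [Finset.mem_Icc, Finset.mem_insert]
      push_cast
      omega
    rw [hset, Finset.sum_insert (by simp; omega), Finset.sum_insert (by simp), ih]
    push_cast
    rw [show -(P : ℤ) - 1 + 1 = -P by ring, show -((P : ℤ) + 1) = -P - 1 by ring]
    abel

/-- The integral of the character `t ↦ e^{2πipt}` over a full period. -/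
theorem integral_exp_two_pi_I_mul_period (a : ℝ) (p : ℤ) :
    ∫ t in a..(a + 1), Complex.exp (2 * (π : ℂ) * Complex.I * p * (t : ℂ)) =
      if p = 0 then 1 else 0 := by
  split_ifs with hp
  · simp [hp]
  · have hc : 2 * (π : ℂ) * Complex.I * p ≠ 0 :=
      mul_ne_zero Complex.two_pi_I_ne_zero (by exact_mod_cast hp)
    rw [integral_exp_mul_complex hc, div_eq_zero_iff]
    left
    have : 2 * (π : ℂ) * Complex.I * p * ((a + 1 : ℝ) : ℂ) =
        2 * (π : ℂ) * Complex.I * p * a + p * (2 * π * Complex.I) := by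
      push_cast
      ring
    rw [this, Complex.exp_add, Complex.exp_int_mul_two_pi_mul_I, mul_one, sub_self]

/-- Convergence of the symmetric partial sums of a Fourier series at a point of
differentiability inside the period. -/
theorem tendsto_sum_integral_mul_exp {g : ℝ → ℂ} (hg : Continuous g)
    (hg0 : DifferentiableAt ℝ g 0) {a : ℝ} (ha : -1 < a) (ha0 : a < 0) :
    Tendsto (fun P : ℕ => ∑ p ∈ Finset.Icc (-(P : ℤ)) (P : ℤ),
        ∫ t in a..(a + 1), g t * Complex.exp (2 * (π : ℂ) * Complex.I * (p : ℂ) * (t : ℂ)))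
      atTop (nhds (g 0)) := by
  obtain ⟨h, hh, hgh⟩ := exists_continuousOn_eq_add_exp_sub_one_mul hg hg0 ha ha0
  have hle : a ≤ a + 1 := by linarith
  set c : ℝ → ℂ := fun w => ∫ t in a..(a + 1),
    h t * Complex.exp (2 * (π : ℂ) * Complex.I * w * t) with hc
  have hint : ∀ w : ℝ, IntervalIntegrable
      (fun t : ℝ => h t * Complex.exp (2 * (π : ℂ) * Complex.I * w * t))
      MeasureTheory.volume a (a + 1) := fun w => by
    apply ContinuousOn.intervalIntegrable
    rw [Set.uIcc_of_le hle]
    exact hh.mul (by fun_prop)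
  have hterm : ∀ p : ℤ,
      ∫ t in a..(a + 1), g t * Complex.exp (2 * (π : ℂ) * Complex.I * (p : ℂ) * (t : ℂ)) =
        g 0 * (if p = 0 then 1 else 0) + (c ((p + 1 : ℤ) : ℝ) - c (p : ℝ)) := by
    intro p
    rw [← integral_exp_two_pi_I_mul_period a p, ← intervalIntegral.integral_const_mul, hc]
    simp only
    rw [← intervalIntegral.integral_sub (hint _) (hint _), ← intervalIntegral.integral_add
      (Continuous.intervalIntegrable (by fun_prop) _ _) ((hint _).sub (hint _))]
    refine intervalIntegral.integral_congr fun t ht => ?_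
    rw [Set.uIcc_of_le hle] at ht
    have hexp : Complex.exp (2 * (π : ℂ) * Complex.I * ((p + 1 : ℤ) : ℂ) * t) =
        Complex.exp (2 * (π : ℂ) * Complex.I * t) *
          Complex.exp (2 * (π : ℂ) * Complex.I * p * t) := by
      rw [← Complex.exp_add]
      congr 1
      push_cast
      ring
    simp only [Complex.ofReal_intCast, hexp, hgh t ht]
    ring
  have hsum : ∀ P : ℕ, ∑ p ∈ Finset.Icc (-(P : ℤ)) (P : ℤ),
      ∫ t in a..(a + 1), g t * Complex.exp (2 * (π : ℂ) * Complex.I * (p : ℂ) * (t : ℂ)) =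
        g 0 + (c ((P : ℝ) + 1) - c (-(P : ℝ))) := by
    intro P
    simp only [hterm]
    rw [Finset.sum_add_distrib, sum_Icc_neg_sub_telescope (fun p : ℤ => c (p : ℝ))]
    simp
  simp only [hsum]
  have hRL := tendsto_intervalIntegral_mul_exp_cocompact h hle
  have htop : Tendsto (fun P : ℕ => c ((P : ℝ) + 1)) atTop (nhds 0) :=
    (hRL.mono_left atTop_le_cocompact).comp
      (tendsto_atTop_add_const_right _ _ tendsto_natCast_atTop_atTop)
  have hbot : Tendsto (fun P : ℕ => c (-(P : ℝ))) atTop (nhds 0) :=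
    (hRL.mono_left atBot_le_cocompact).comp
      (tendsto_neg_atTop_atBot.comp tendsto_natCast_atTop_atTop)
  simpa using (htop.sub hbot).const_add (g 0)

/-- Splitting an integral over `[0, k]` against a character into integrals over a single period. -/
theorem exp_mul_integral_eq_sum_integral_period {f : ℝ → ℂ} (hf : Continuous f) (k : ℕ) (a : ℝ)
    (p : ℤ) :
    Complex.exp (2 * (π : ℂ) * Complex.I * p * a) *
        ∫ t in (0 : ℝ)..(k : ℝ), f (t + a) * Complex.exp (2 * (π : ℂ) * Complex.I * p * (t : ℂ)) =
      ∑ n ∈ Finset.range k, ∫ t in a..(a + 1),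
        f (t + n) * Complex.exp (2 * (π : ℂ) * Complex.I * p * (t : ℂ)) := by
  have hsplit := intervalIntegral.sum_integral_adjacent_intervals (μ := MeasureTheory.volume)
    (f := fun t : ℝ => f (t + a) * Complex.exp (2 * (π : ℂ) * Complex.I * p * (t : ℂ)))
    (a := fun n : ℕ => (n : ℝ)) (n := k)
    (fun n _ => Continuous.intervalIntegrable (by fun_prop) _ _)
  rw [Nat.cast_zero] at hsplit
  rw [← hsplit, Finset.mul_sum]
  refine Finset.sum_congr rfl fun n _ => ?_
  rw [← intervalIntegral.integral_const_mul]
  have hshift := intervalIntegral.integral_comp_add_right (a := a) (b := a + 1)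
    (fun t : ℝ => Complex.exp (2 * (π : ℂ) * Complex.I * p * a) *
      (f (t + a) * Complex.exp (2 * (π : ℂ) * Complex.I * p * (t : ℂ)))) ((n : ℝ) - a)
  rw [show a + ((n : ℝ) - a) = n by ring,
    show a + 1 + ((n : ℝ) - a) = ((n + 1 : ℕ) : ℝ) by push_cast; ring] at hshift
  rw [← hshift]
  refine intervalIntegral.integral_congr fun t _ => ?_
  have hexp : Complex.exp (2 * (π : ℂ) * Complex.I * p * a) *
      Complex.exp (2 * (π : ℂ) * Complex.I * p * ((t + ((n : ℝ) - a) : ℝ) : ℂ)) =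
        Complex.exp (2 * (π : ℂ) * Complex.I * p * t) := by
    rw [← Complex.exp_add, show 2 * (π : ℂ) * Complex.I * p * a +
        2 * (π : ℂ) * Complex.I * p * ((t + ((n : ℝ) - a) : ℝ) : ℂ) =
        2 * (π : ℂ) * Complex.I * p * t + ((p * n : ℤ) : ℂ) * (2 * π * Complex.I) by
      push_cast; ring, Complex.exp_add, Complex.exp_int_mul_two_pi_mul_I, mul_one]
  rw [mul_left_comm, hexp, show t + ((n : ℝ) - a) + a = t + n by ring]

/-- Truncated Poisson resummation: for a Schwartz function `f`, a positive integer `k`, and a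
real `α` with `|α| < 1/2`, the symmetric partial sums
`∑_{p=−P}^{P} e^{2πi·p·(α−1/2)} · ∫₀^k f(t + α − 1/2)·e^{2πi·p·t} dt`
converge as `P → ∞` to `∑_{n=0}^{k−1} f(n)`. -/
theorem poisson_resummation (f : SchwartzMap ℝ ℂ) (k : ℕ) (hk : 0 < k)
    (α : ℝ) (hα : |α| < 1 / 2) :
    Tendsto
      (fun P : ℕ => ∑ p ∈ Finset.Icc (-(P : ℤ)) (P : ℤ),
        Complex.exp (2 * (π : ℂ) * Complex.I * (p : ℂ) * ((α : ℂ) - 1 / 2)) *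
          ∫ t in (0 : ℝ)..(k : ℝ),
            f (t + α - 1 / 2) * Complex.exp (2 * (π : ℂ) * Complex.I * (p : ℂ) * (t : ℂ)))
      atTop (nhds (∑ n ∈ Finset.range k, f (n : ℝ))) := by
  have ha := abs_lt.1 hα
  have hlim := tendsto_finsetSum (Finset.range k) fun n _ =>
    tendsto_sum_integral_mul_exp (g := fun t => f (t + n)) (a := α - 1 / 2) (by fun_prop)
      (f.differentiable.comp (differentiable_id.add_const _)).differentiableAt
      (by linarith) (by linarith)
  simp only [zero_add] at hlim
  refine hlim.congr fun P => ?_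
  rw [Finset.sum_comm]
  refine Finset.sum_congr rfl fun p _ => ?_
  rw [← exp_mul_integral_eq_sum_integral_period f.continuous]
  simp [add_sub_assoc]
end
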